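/- arXiv:2405.08075 — 2 statements merged into one kernel-verified Lean document; each statement's English description precedes it below -/
import Mathlib

section
/- Let G be a two-generated finite 2-group whose central quotient G/Z(G) is dihedral of order 2^{ℓ+1}. Then G is isomorphic to a group with presentation ⟨x, y, z | x^{2^n} = z^{r2^{ℓ-1}}, y^{2^m} = x^{s2^m} z^{t2^{ℓ-1}}, z^{2^ℓ} = 1, [y,x] = z, [z,x] = z^{-2}, [z,y] = z^{-2}⟩ for some integers n ≥ m ≥ 1, ℓ ≥ 2, 0 ≤ r ≤ 1, 0 ≤ s ≤ 2^{n-m} - 1, 0 ≤ t ≤ 1; moreover G/[G,G] ≅ C_{2^n} × C_{2^m} and [G,G] ≅ C_{2^ℓ}. -/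
open FreeGroup in
/-- Relators of G_θ = ⟨x,y,z | x^{2^n} = z^{r·2^{ℓ-1}}, y^{2^m} = x^{s·2^m}·z^{t·2^{ℓ-1}},
z^{2^ℓ} = 1, [y,x] = z, [z,x] = z⁻², [z,y] = z⁻²⟩ (convention [y,x] = y⁻¹x⁻¹yx;
generators 0 ↦ x, 1 ↦ y, 2 ↦ z). -/
def relsGθ (n m ℓ r s t : ℕ) : Set (FreeGroup (Fin 3)) :=
  { (of 0) ^ (2 ^ n) * ((of 2) ^ (r * 2 ^ (ℓ - 1)))⁻¹,
    (of 1) ^ (2 ^ m) * ((of 0) ^ (s * 2 ^ m) * (of 2) ^ (t * 2 ^ (ℓ - 1)))⁻¹,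
    (of 2) ^ (2 ^ ℓ),
    (of 1)⁻¹ * (of 0)⁻¹ * of 1 * of 0 * (of 2)⁻¹,
    (of 2)⁻¹ * (of 0)⁻¹ * of 2 * of 0 * (of 2) ^ 2,
    (of 2)⁻¹ * (of 1)⁻¹ * of 2 * of 1 * (of 2) ^ 2 }

abbrev Gθ (n m ℓ r s t : ℕ) := PresentedGroup (relsGθ n m ℓ r s t)


section Aux12

open scoped commutatorElement

/-- Normal form in a group satisfying the commutator relations. -/
lemma aux_nf {P : Type*} [Group P] (x y z : P) (hzx : z * x = x * z⁻¹) (hzy : z * y = y * z⁻¹)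
    (hyx : y * x = x * (y * z)) (hgen : Subgroup.closure {x, y, z} = ⊤) (g : P) :
    ∃ a b c : ℤ, g = x ^ a * y ^ b * z ^ c := by
  have hzx' : ∀ c : ℤ, z ^ c * x = x * z ^ (-c) := by
    intro c
    have h : SemiconjBy x z⁻¹ z := hzx.symm
    have := h.zpow_right c
    rw [zpow_neg, ← inv_zpow]; exact this.symm
  have hzy' : ∀ c : ℤ, z ^ c * y = y * z ^ (-c) := by
    intro c
    have h : SemiconjBy y z⁻¹ z := hzy.symm
    have := h.zpow_right c
    rw [zpow_neg, ← inv_zpow]; exact this.symm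
  have hzxi : ∀ c : ℤ, z ^ c * x⁻¹ = x⁻¹ * z ^ (-c) := by
    intro c
    have := hzx' (-c)
    rw [neg_neg] at this
    rw [mul_inv_eq_iff_eq_mul, mul_assoc, this]; group
  have hzyi : ∀ c : ℤ, z ^ c * y⁻¹ = y⁻¹ * z ^ (-c) := by
    intro c
    have := hzy' (-c)
    rw [neg_neg] at this
    rw [mul_inv_eq_iff_eq_mul, mul_assoc, this]; group
  have hyz : ∀ b : ℤ, ∃ e : ℤ, (y * z) ^ b = y ^ b * z ^ e := by
    intro b
    induction b using Int.induction_on with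
    | zero => exact ⟨0, by simp⟩
    | succ i ih =>
      obtain ⟨e, he⟩ := ih
      refine ⟨-e + 1, ?_⟩
      rw [zpow_add_one, he, zpow_add_one, zpow_add_one]
      simp only [mul_assoc]
      rw [← mul_assoc (z ^ e), hzy' e]
      simp only [mul_assoc]
    | pred i ih =>
      obtain ⟨e, he⟩ := ih
      refine ⟨-(e - 1), ?_⟩
      rw [zpow_sub_one, he, zpow_sub_one, mul_inv_rev, mul_assoc, ← mul_assoc (z ^ e),
        ← zpow_sub_one, hzyi]
      simp only [mul_assoc]
  have hyx' : ∀ b : ℤ, ∃ e : ℤ, y ^ b * x = x * y ^ b * z ^ e := by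
    intro b
    obtain ⟨e, he⟩ := hyz b
    refine ⟨e, ?_⟩
    have h : SemiconjBy x (y * z) y := hyx.symm
    have := h.zpow_right b
    rw [he] at this
    rw [mul_assoc]; exact this.symm
  have hyxi : ∀ b : ℤ, ∃ e : ℤ, y ^ b * x⁻¹ = x⁻¹ * y ^ b * z ^ e := by
    intro b
    obtain ⟨e, he⟩ := hyx' b
    refine ⟨e, ?_⟩
    have h2 : x⁻¹ * y ^ b = y ^ b * z ^ e * x⁻¹ := by
      rw [inv_mul_eq_iff_eq_mul, ← mul_assoc, ← mul_assoc, ← he]; group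
    rw [h2, mul_assoc (y ^ b), hzxi]; group
  have hg : g ∈ Subgroup.closure {x, y, z} := by rw [hgen]; trivial
  induction hg using Subgroup.closure_induction_right with
  | one => exact ⟨0, 0, 0, by simp⟩
  | mul_right g hg k hk ih =>
    obtain ⟨a, b, c, rfl⟩ := ih
    simp only [Set.mem_insert_iff, Set.mem_singleton_iff] at hk
    rcases hk with rfl | rfl | rfl
    · obtain ⟨e, he⟩ := hyx' b
      refine ⟨a + 1, b, e + -c, ?_⟩
      rw [mul_assoc, hzx', ← mul_assoc, mul_assoc (k ^ a), he, zpow_add_one, zpow_add]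
      simp only [mul_assoc]
    · refine ⟨a, b + 1, -c, ?_⟩
      rw [mul_assoc, hzy', ← mul_assoc, zpow_add_one]
      simp only [mul_assoc]
    · exact ⟨a, b, c + 1, by rw [zpow_add_one]; simp only [mul_assoc]⟩
  | mul_inv_cancel g hg k hk ih =>
    obtain ⟨a, b, c, rfl⟩ := ih
    simp only [Set.mem_insert_iff, Set.mem_singleton_iff] at hk
    rcases hk with rfl | rfl | rfl
    · obtain ⟨e, he⟩ := hyxi b
      refine ⟨a - 1, b, e + -c, ?_⟩
      rw [mul_assoc, hzxi, ← mul_assoc, mul_assoc (k ^ a), he, zpow_sub_one, zpow_add]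
      simp only [mul_assoc]
    · refine ⟨a, b - 1, -c, ?_⟩
      rw [mul_assoc, hzyi, ← mul_assoc, zpow_sub_one]
      simp only [mul_assoc]
    · exact ⟨a, b, c - 1, by rw [zpow_sub_one]; simp only [mul_assoc]⟩

/-- The dihedral input: two generators mapping to reflections. -/
lemma aux_refl {G : Type*} [Group G] (x y : G) (hgen : Subgroup.closure {x, y} = ⊤) (N : ℕ)
    (φ : G →* DihedralGroup N) (hφ : Function.Surjective φ) :
    ∃ (x' y' : G) (i j : ZMod N), Subgroup.closure {x', y'} = ⊤ ∧
      φ x' = DihedralGroup.sr i ∧ φ y' = DihedralGroup.sr j := by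
  have key : ∀ u v : G, Subgroup.closure {u, v} = ⊤ → Subgroup.closure {u * v, v} = ⊤ := by
    intro u v h
    rw [eq_top_iff, ← h, Subgroup.closure_le]
    have hv : v ∈ Subgroup.closure {u * v, v} := Subgroup.subset_closure (by simp)
    have huv : u * v ∈ Subgroup.closure {u * v, v} := Subgroup.subset_closure (by simp)
    intro w hw
    simp only [Set.mem_insert_iff, Set.mem_singleton_iff] at hw
    rcases hw with rfl | rfl
    · have := Subgroup.mul_mem _ huv (Subgroup.inv_mem _ hv)
      simpa using this
    · exact hv
  rcases hx : φ x with i | i <;> rcases hy : φ y with j | j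
  · exfalso
    have h : ∀ g : G, ∃ k, φ g = DihedralGroup.r k := by
      intro g
      have hg : g ∈ Subgroup.closure {x, y} := by rw [hgen]; trivial
      induction hg using Subgroup.closure_induction with
      | mem g hg =>
        rcases hg with rfl | rfl
        · exact ⟨i, hx⟩
        · exact ⟨j, hy⟩
      | one => exact ⟨0, by rw [map_one]; rfl⟩
      | mul a b _ _ ha hb =>
        obtain ⟨k, hk⟩ := ha
        obtain ⟨l, hl⟩ := hb
        exact ⟨k + l, by rw [map_mul, hk, hl, DihedralGroup.r_mul_r]⟩
      | inv a _ ha =>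
        obtain ⟨k, hk⟩ := ha
        exact ⟨-k, by rw [map_inv, hk, DihedralGroup.inv_r]⟩
    obtain ⟨g, hg⟩ := hφ (DihedralGroup.sr 0)
    obtain ⟨k, hk⟩ := h g
    rw [hg] at hk
    cases hk
  · exact ⟨x * y, y, _, j, key x y hgen, by rw [map_mul, hx, hy, DihedralGroup.r_mul_sr], hy⟩
  · refine ⟨y * x, x, i - j, i, key y x (by rwa [Set.pair_comm]), ?_, hx⟩
    rw [map_mul, hx, hy, DihedralGroup.r_mul_sr]
  · exact ⟨x, y, i, j, hgen, hx, hy⟩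

lemma aux_odd {G : Type*} [Group G] (x y : G) (hgen : Subgroup.closure {x, y} = ⊤) (ℓ : ℕ)
    (hℓ : 2 ≤ ℓ) (φ : G →* DihedralGroup (2 ^ ℓ)) (hφ : Function.Surjective φ)
    (i j : ZMod (2 ^ ℓ)) (hx : φ x = DihedralGroup.sr i) (hy : φ y = DihedralGroup.sr j) :
    ¬ Even (i - j) := by
  intro hij
  have h : ∀ g : G, (∃ k, Even k ∧ φ g = DihedralGroup.r k) ∨
      (∃ k, Even k ∧ φ g = DihedralGroup.sr (i + k)) := by
    intro g
    have hg : g ∈ Subgroup.closure {x, y} := by rw [hgen]; trivial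
    induction hg using Subgroup.closure_induction with
    | mem g hg =>
      right
      rcases hg with rfl | rfl
      · exact ⟨0, Even.zero, by rw [hx, add_zero]⟩
      · exact ⟨-(i - j), hij.neg, by rw [hy]; congr 1; ring⟩
    | one => exact Or.inl ⟨0, Even.zero, by rw [map_one]; rfl⟩
    | mul a b _ _ ha hb =>
      rcases ha with ⟨k, ek, hk⟩ | ⟨k, ek, hk⟩ <;> rcases hb with ⟨l, el, hl⟩ | ⟨l, el, hl⟩
      · exact Or.inl ⟨k + l, ek.add el, by rw [map_mul, hk, hl, DihedralGroup.r_mul_r]⟩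
      · exact Or.inr ⟨l - k, el.sub ek, by
          rw [map_mul, hk, hl, DihedralGroup.r_mul_sr]; congr 1; ring⟩
      · exact Or.inr ⟨k + l, ek.add el, by
          rw [map_mul, hk, hl, DihedralGroup.sr_mul_r]; congr 1; ring⟩
      · exact Or.inl ⟨l - k, el.sub ek, by
          rw [map_mul, hk, hl, DihedralGroup.sr_mul_sr]; congr 1; ring⟩
    | inv a _ ha =>
      rcases ha with ⟨k, ek, hk⟩ | ⟨k, ek, hk⟩
      · exact Or.inl ⟨-k, ek.neg, by rw [map_inv, hk, DihedralGroup.inv_r]⟩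
      · exact Or.inr ⟨k, ek, by rw [map_inv, hk, DihedralGroup.inv_sr]⟩
  obtain ⟨g, hg⟩ := hφ (DihedralGroup.r 1)
  rcases h g with ⟨k, ⟨l, hl⟩, hk⟩ | ⟨k, ek, hk⟩
  · rw [hg] at hk
    injection hk with hk
    rw [hl] at hk
    have h2 : (2 : ℕ) ∣ 2 ^ ℓ := dvd_pow_self 2 (by omega)
    have := congrArg (ZMod.castHom h2 (ZMod 2)) hk
    rw [map_one, map_add, CharTwo.add_self_eq_zero] at this
    exact one_ne_zero this
  · rw [hg] at hk
    cases hk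

/-- The abelian part. -/
lemma aux_ab {A : Type*} [CommGroup A] [Finite A] (hA : IsPGroup 2 A) (X Y : A)
    (hnf : ∀ g : A, ∃ a b : ℤ, g = X ^ a * Y ^ b) (hYX : orderOf Y ∣ orderOf X)
    (hY : Y ∉ Subgroup.zpowers X) :
    ∃ n m s : ℕ, 1 ≤ m ∧ m ≤ n ∧ s ≤ 2 ^ (n - m) - 1 ∧ orderOf X = 2 ^ n ∧
      Y ^ (2 ^ m) = X ^ (s * 2 ^ m) ∧ (∀ a b : ℤ, X ^ a * Y ^ b = 1 → (2 ^ m : ℤ) ∣ b) ∧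
      Nonempty (A ≃* Multiplicative (ZMod (2 ^ n)) × Multiplicative (ZMod (2 ^ m))) := by
  obtain ⟨n, hn⟩ := IsPGroup.iff_orderOf.mp hA X
  obtain ⟨m, hm⟩ := IsPGroup.iff_orderOf.mp (hA.to_quotient (Subgroup.zpowers X))
    (QuotientGroup.mk Y : A ⧸ Subgroup.zpowers X)
  have hb : ∀ b : ℤ, Y ^ b ∈ Subgroup.zpowers X ↔ (2 ^ m : ℤ) ∣ b := by
    intro b
    rw [← QuotientGroup.eq_one_iff, QuotientGroup.mk_zpow, ← orderOf_dvd_iff_zpow_eq_one, hm]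
    push_cast; rfl
  have hm1 : 1 ≤ m := by
    rcases Nat.eq_zero_or_pos m with h | h
    · exact absurd ((by simpa [h] using hb 1)) hY
    · exact h
  have hYn : Y ^ (2 ^ n) = 1 := by rw [← hn]; exact orderOf_dvd_iff_pow_eq_one.mp hYX
  have hmn : m ≤ n := by
    have h1 : Y ^ ((2 ^ n : ℕ) : ℤ) ∈ Subgroup.zpowers X := by
      rw [zpow_natCast, hYn]; exact Subgroup.one_mem _
    rw [hb] at h1
    have h2 : 2 ^ m ∣ 2 ^ n := by exact_mod_cast h1
    exact (Nat.pow_dvd_pow_iff_le_right (by norm_num)).mp h2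
  have hfact : ∀ a b : ℤ, X ^ a * Y ^ b = 1 → (2 ^ m : ℤ) ∣ b := by
    intro a b h
    rw [← hb]
    exact ⟨-a, by simp only [zpow_neg]; exact (eq_inv_of_mul_eq_one_right h).symm⟩
  obtain ⟨k, hk⟩ := (hb (2 ^ m)).mpr dvd_rfl
  have hk : X ^ k = Y ^ (2 ^ m) := by
    simp only at hk
    rw [hk]; exact_mod_cast zpow_natCast Y (2 ^ m)
  have hsplit : (2 ^ n : ℤ) = 2 ^ m * 2 ^ (n - m) := by rw [← pow_add]; congr 1; omega
  have hk2 : (2 ^ m : ℤ) ∣ k := by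
    have h1 : X ^ (k * ((2 ^ (n - m) : ℕ) : ℤ)) = 1 := by
      rw [zpow_mul, hk, zpow_natCast, ← pow_mul, ← pow_add]
      rw [show m + (n - m) = n by omega, hYn]
    rw [← orderOf_dvd_iff_zpow_eq_one, hn] at h1
    push_cast at h1
    rw [hsplit] at h1
    exact Int.dvd_of_mul_dvd_mul_right (by positivity) h1
  obtain ⟨q, rfl⟩ := hk2
  have hpos : (0 : ℤ) < 2 ^ (n - m) := by positivity
  obtain ⟨s, hs⟩ := Int.eq_ofNat_of_zero_le (Int.emod_nonneg q hpos.ne')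
  have hslt := Int.emod_lt_of_pos q hpos
  rw [hs] at hslt
  have hslt : s < 2 ^ (n - m) := by exact_mod_cast hslt
  have hYs : Y ^ (2 ^ m) = X ^ (s * 2 ^ m) := by
    rw [← hk, ← zpow_natCast X (s * 2 ^ m), ← mul_inv_eq_one, ← zpow_neg, ← zpow_add,
      ← orderOf_dvd_iff_zpow_eq_one, hn]
    push_cast
    rw [← hs, hsplit]
    refine ⟨q / 2 ^ (n - m), ?_⟩
    have := Int.emod_add_mul_ediv q (2 ^ (n - m))
    linear_combination (2 : ℤ) ^ m * (-this)
  refine ⟨n, m, s, hm1, hmn, by omega, hn, hYs, hfact, ?_⟩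
  set W := Y * (X ^ s)⁻¹ with hW
  have hWz : ∀ b : ℤ, W ^ b = X ^ (-(s * b : ℤ)) * Y ^ b := by
    intro b
    rw [hW, mul_zpow, mul_comm, inv_zpow, zpow_neg, zpow_mul, zpow_natCast]
  have hWm : W ^ (2 ^ m) = 1 := by
    rw [hW, mul_pow, hYs, inv_pow, ← pow_mul, mul_inv_cancel]
  have hWord : orderOf W = 2 ^ m := by
    apply Nat.dvd_antisymm (orderOf_dvd_of_pow_eq_one hWm)
    have h1 : W ^ ((orderOf W : ℕ) : ℤ) = 1 := by rw [zpow_natCast, pow_orderOf_eq_one]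
    rw [hWz] at h1
    exact_mod_cast hfact _ _ h1
  let f : Subgroup.zpowers X × Subgroup.zpowers W →* A :=
    MonoidHom.coprod (Subgroup.zpowers X).subtype (Subgroup.zpowers W).subtype
  have hf : Function.Bijective f := by
    constructor
    · rw [injective_iff_map_eq_one]
      rintro ⟨⟨_, a, rfl⟩, ⟨_, b, rfl⟩⟩ h
      have h' : X ^ a * W ^ b = 1 := h
      have hWb : W ^ b = 1 := by
        have h2 := h'
        rw [hWz, ← mul_assoc, ← zpow_add] at h2
        have h3 := hfact _ _ h2
        rw [← orderOf_dvd_iff_zpow_eq_one, hWord]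
        exact_mod_cast h3
      rw [hWb, mul_one] at h'
      ext
      · exact h'
      · exact hWb
    · intro g
      obtain ⟨a, b, rfl⟩ := hnf g
      refine ⟨⟨⟨X ^ (a + s * b), _, rfl⟩, ⟨W ^ b, _, rfl⟩⟩, ?_⟩
      show X ^ (a + s * b) * W ^ b = _
      rw [hWz, ← mul_assoc, ← zpow_add]
      congr 2; ring
  have e1 : Multiplicative (ZMod (2 ^ n)) ≃* Subgroup.zpowers X := by
    have := zmodCyclicMulEquiv (G := Subgroup.zpowers X) inferInstance
    rwa [Nat.card_zpowers, hn] at this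
  have e2 : Multiplicative (ZMod (2 ^ m)) ≃* Subgroup.zpowers W := by
    have := zmodCyclicMulEquiv (G := Subgroup.zpowers W) inferInstance
    rwa [Nat.card_zpowers, hWord] at this
  exact ⟨((MulEquiv.prodCongr e1 e2).trans (MulEquiv.ofBijective f hf)).symm⟩

/-- Injectivity onto the presented group. -/
lemma aux_iso {G : Type*} [Group G] (x y z : G) (hgen : Subgroup.closure {x, y} = ⊤)
    (n m ℓ r s t : ℕ) (hm : 1 ≤ m)
    (h1 : x ^ (2 ^ n) = z ^ (r * 2 ^ (ℓ - 1)))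
    (h2 : y ^ (2 ^ m) = x ^ (s * 2 ^ m) * z ^ (t * 2 ^ (ℓ - 1)))
    (h3 : z ^ (2 ^ ℓ) = 1)
    (h4 : z = y⁻¹ * x⁻¹ * y * x) (h5 : z * x = x * z⁻¹) (h6 : z * y = y * z⁻¹)
    (f1 : ∀ a b c : ℤ, x ^ a * y ^ b * z ^ c = 1 → (2 ^ m : ℤ) ∣ b)
    (f2 : ∀ a c : ℤ, x ^ a * z ^ c = 1 → (2 ^ n : ℤ) ∣ a)
    (f3 : ∀ c : ℤ, z ^ c = 1 → (2 ^ ℓ : ℤ) ∣ c) :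
    Nonempty (G ≃* Gθ n m ℓ r s t) := by
  have h5' : z⁻¹ * x⁻¹ * z * x * z ^ 2 = 1 := by
    rw [mul_assoc _ z x, h5]; group
  have h6' : z⁻¹ * y⁻¹ * z * y * z ^ 2 = 1 := by
    rw [mul_assoc _ z y, h6]; group
  have hrel : ∀ w ∈ relsGθ n m ℓ r s t, FreeGroup.lift (![x, y, z] : Fin 3 → G) w = 1 := by
    intro w hw
    simp only [relsGθ, Set.mem_insert_iff, Set.mem_singleton_iff] at hw
    rcases hw with rfl | rfl | rfl | rfl | rfl | rfl <;>
      simp only [map_mul, map_inv, map_pow, FreeGroup.lift_apply_of, Matrix.cons_val]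
    · rw [h1, mul_inv_cancel]
    · rw [h2, mul_inv_cancel]
    · exact h3
    · rw [← h4, mul_inv_cancel]
    · exact h5'
    · exact h6'
  let F : Gθ n m ℓ r s t →* G := PresentedGroup.toGroup hrel
  obtain ⟨X, hX⟩ : ∃ X : Gθ n m ℓ r s t, X = PresentedGroup.of 0 := ⟨_, rfl⟩
  obtain ⟨Y, hY⟩ : ∃ X : Gθ n m ℓ r s t, X = PresentedGroup.of 1 := ⟨_, rfl⟩
  obtain ⟨Z, hZ⟩ : ∃ X : Gθ n m ℓ r s t, X = PresentedGroup.of 2 := ⟨_, rfl⟩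
  have FX : F X = x := by rw [hX]; exact PresentedGroup.toGroup.of hrel
  have FY : F Y = y := by rw [hY]; exact PresentedGroup.toGroup.of hrel
  have FZ : F Z = z := by rw [hZ]; exact PresentedGroup.toGroup.of hrel
  have hone : ∀ w ∈ relsGθ n m ℓ r s t, PresentedGroup.mk (relsGθ n m ℓ r s t) w = 1 :=
    fun w hw => PresentedGroup.one_of_mem hw
  have r1 : X ^ (2 ^ n) * (Z ^ (r * 2 ^ (ℓ - 1)))⁻¹ = 1 := by
    rw [hX, hZ]; exact hone _ (by simp [relsGθ])
  have r2 : Y ^ (2 ^ m) * (X ^ (s * 2 ^ m) * Z ^ (t * 2 ^ (ℓ - 1)))⁻¹ = 1 := by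
    rw [hX, hZ, hY]; exact hone _ (by unfold relsGθ; right; left; rfl)
  have r3 : Z ^ (2 ^ ℓ) = 1 := by
    rw [hZ]; exact hone _ (by unfold relsGθ; right; right; left; rfl)
  have r4 : Y⁻¹ * X⁻¹ * Y * X * Z⁻¹ = 1 := by
    rw [hX, hZ, hY]; exact hone _ (by unfold relsGθ; right; right; right; left; rfl)
  have r5 : Z⁻¹ * X⁻¹ * Z * X * Z ^ 2 = 1 := by
    rw [hX, hZ]; exact hone _ (by unfold relsGθ; right; right; right; right; left; rfl)
  have r6 : Z⁻¹ * Y⁻¹ * Z * Y * Z ^ 2 = 1 := by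
    rw [hY, hZ]; exact hone _ (by unfold relsGθ; right; right; right; right; right; rfl)
  have r1 := mul_inv_eq_one.mp r1
  have r2 := mul_inv_eq_one.mp r2
  have r4 : Y * X = X * (Y * Z) := by
    rw [← mul_inv_eq_one.mp r4]; group
  have r5 : Z * X = X * Z⁻¹ := by
    have e : Z * X = X * Z * (Z⁻¹ * X⁻¹ * Z * X * Z ^ 2) * (Z ^ 2)⁻¹ := by group
    rw [e, r5]; group
  have r6 : Z * Y = Y * Z⁻¹ := by
    have e : Z * Y = Y * Z * (Z⁻¹ * Y⁻¹ * Z * Y * Z ^ 2) * (Z ^ 2)⁻¹ := by group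
    rw [e, r6]; group
  have hcl : Subgroup.closure {X, Y, Z} = ⊤ := by
    rw [← PresentedGroup.closure_range_of (relsGθ n m ℓ r s t)]
    congr 1
    ext g
    simp only [Set.mem_insert_iff, Set.mem_singleton_iff, Set.mem_range, Fin.exists_fin_succ,
      hX, hY, hZ]
    simp [eq_comm]
  have hnf := aux_nf X Y Z r5 r6 r4 hcl
  have hcomm : Commute (X ^ (s * 2 ^ m)) Z := by
    have h : Commute (X ^ 2) Z := by
      show X ^ 2 * Z = Z * X ^ 2
      have e : Z * X ^ 2 = (Z * X) * X := by rw [pow_two, mul_assoc]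
      have e' : Z⁻¹ * X = X * Z := by
        rw [inv_mul_eq_iff_eq_mul, ← mul_assoc, r5]; group
      rw [e, r5, mul_assoc, e', pow_two, mul_assoc]
    obtain ⟨k, rfl⟩ : ∃ k, m = k + 1 := ⟨m - 1, by omega⟩
    have : s * 2 ^ (k + 1) = 2 * (s * 2 ^ k) := by ring
    rw [this, pow_mul]
    exact h.pow_left _
  have Finj : Function.Injective F := by
    rw [injective_iff_map_eq_one]
    intro g hg
    obtain ⟨a, b, c, rfl⟩ := hnf g
    have hb := hg
    simp only [map_mul, map_zpow, FX, FY, FZ] at hb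
    obtain ⟨b', rfl⟩ := f1 a b c hb
    have e1 : ∃ a' c' : ℤ, X ^ a * Y ^ ((2 : ℤ) ^ m * b') * Z ^ c = X ^ a' * Z ^ c' := by
      refine ⟨a + ((s * 2 ^ m : ℕ) : ℤ) * b', ((t * 2 ^ (ℓ - 1) : ℕ) : ℤ) * b' + c, ?_⟩
      have : Y ^ ((2 : ℤ) ^ m * b') = (Y ^ (2 ^ m)) ^ b' := by
        rw [zpow_mul]; congr 1
      rw [this, r2, (hcomm.pow_right _).mul_zpow, zpow_add, zpow_add, zpow_mul, zpow_mul,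
        zpow_natCast, zpow_natCast]
      simp only [mul_assoc]
    obtain ⟨a', c', e1⟩ := e1
    rw [e1] at hg ⊢
    have ha := hg
    simp only [map_mul, map_zpow, FX, FZ] at ha
    obtain ⟨a'', rfl⟩ := f2 a' c' ha
    have e2 : ∃ c'' : ℤ, X ^ ((2 : ℤ) ^ n * a'') * Z ^ c' = Z ^ c'' := by
      refine ⟨((r * 2 ^ (ℓ - 1) : ℕ) : ℤ) * a'' + c', ?_⟩
      have : X ^ ((2 : ℤ) ^ n * a'') = (X ^ (2 ^ n)) ^ a'' := by
        rw [zpow_mul]; congr 1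
      rw [this, r1, zpow_add, zpow_mul, zpow_natCast]
    obtain ⟨c'', e2⟩ := e2
    rw [e2] at hg ⊢
    have hc := hg
    simp only [map_zpow, FZ] at hc
    obtain ⟨d, rfl⟩ := f3 c'' hc
    have : Z ^ ((2 : ℤ) ^ ℓ) = 1 := by
      rw [← r3]; exact_mod_cast zpow_natCast Z (2 ^ ℓ)
    rw [zpow_mul, this, one_zpow]
  have Fsurj : Function.Surjective F := by
    rw [← MonoidHom.range_eq_top, eq_top_iff, ← hgen, Subgroup.closure_le]
    rintro w (rfl | rfl)
    · exact ⟨X, FX⟩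
    · exact ⟨Y, FY⟩
  exact ⟨(MulEquiv.ofBijective F ⟨Finj, Fsurj⟩).symm⟩

/-- Main argument once the generators are normalised. -/
lemma aux_core {G : Type*} [Group G] [Finite G] (hG : IsPGroup 2 G)
    (x y : G) (hgen : Subgroup.closure {x, y} = ⊤) (ℓ : ℕ) (hℓ : 2 ≤ ℓ)
    (hx2 : x ^ 2 ∈ Subgroup.center G) (hy2 : y ^ 2 ∈ Subgroup.center G)
    (hc1 : (y⁻¹ * x⁻¹ * y * x) ^ (2 ^ (ℓ - 1)) ∈ Subgroup.center G)
    (hc2 : (y⁻¹ * x⁻¹ * y * x) ^ (2 ^ (ℓ - 2)) ∉ Subgroup.center G)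
    (hord : orderOf (Abelianization.of y) ∣ orderOf (Abelianization.of x)) :
    ∃ n m r s t : ℕ, 1 ≤ m ∧ m ≤ n ∧ r ≤ 1 ∧ s ≤ 2 ^ (n - m) - 1 ∧ t ≤ 1 ∧
      Nonempty (G ≃* Gθ n m ℓ r s t) ∧
      Nonempty ((G ⧸ commutator G) ≃*
        (Multiplicative (ZMod (2 ^ n)) × Multiplicative (ZMod (2 ^ m)))) ∧
      Nonempty (commutator G ≃* Multiplicative (ZMod (2 ^ ℓ))) := by
  obtain ⟨z, hz⟩ : ∃ z, z = y⁻¹ * x⁻¹ * y * x := ⟨_, rfl⟩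
  rw [← hz] at hc1 hc2
  have cx : ∀ g, g * x ^ 2 = x ^ 2 * g := Subgroup.mem_center_iff.mp hx2
  have cy : ∀ g, g * y ^ 2 = y ^ 2 * g := Subgroup.mem_center_iff.mp hy2
  have hzx : z * x = x * z⁻¹ := by
    have e : z * x = y⁻¹ * x⁻¹ * (y * x ^ 2) := by
      rw [hz, pow_two]; simp only [mul_assoc]
    rw [e, cx, hz]
    have e2 : y⁻¹ * x⁻¹ * (x ^ 2 * y) = y⁻¹ * x * y := by group
    rw [e2]; group
  have hzy : z * y = y * z⁻¹ := by
    have e : y * z⁻¹ = (y * x⁻¹ * y⁻¹ * x * y⁻¹) * y ^ 2 := by rw [hz]; group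
    have e2 : y⁻¹ * y ^ 2 = y := by group
    rw [e, mul_assoc, e2, mul_assoc _ x y, hz]
    have e3 : y * x⁻¹ * y⁻¹ * (x * y) = y⁻¹ * (y ^ 2 * (x⁻¹ * y⁻¹)) * (x * y) := by group
    rw [e3, ← cy]
    simp only [mul_assoc, pow_two, inv_mul_cancel_left]
  have hyx : y * x = x * (y * z) := by rw [hz]; group
  have hgen3 : Subgroup.closure {x, y, z} = ⊤ := by
    rw [eq_top_iff, ← hgen]
    apply Subgroup.closure_mono
    rintro w (rfl | rfl) <;> simp
  have hnf := aux_nf x y z hzx hzy hyx hgen3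
  have hzx' : ∀ c : ℤ, z ^ c * x = x * z ^ (-c) := by
    intro c
    have h : SemiconjBy x z⁻¹ z := hzx.symm
    have := h.zpow_right c
    rw [zpow_neg, ← inv_zpow]; exact this.symm
  have hzy' : ∀ c : ℤ, z ^ c * y = y * z ^ (-c) := by
    intro c
    have h : SemiconjBy y z⁻¹ z := hzy.symm
    have := h.zpow_right c
    rw [zpow_neg, ← inv_zpow]; exact this.symm
  -- central powers of z
  have hcen : ∀ c : ℤ, z ^ c ∈ Subgroup.center G → z ^ (2 * c) = 1 := by
    intro c hc
    have h1 := Subgroup.mem_center_iff.mp hc x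
    rw [hzx' c] at h1
    have h2 := mul_left_cancel h1
    rw [two_mul, zpow_add]
    nth_rewrite 1 [h2]
    rw [zpow_neg, inv_mul_cancel]
  have hcen' : ∀ c : ℤ, z ^ (2 * c) = 1 → z ^ c ∈ Subgroup.center G := by
    intro c hc
    have h1 : z ^ (-c) = z ^ c := by
      rw [zpow_neg, inv_eq_iff_mul_eq_one, ← zpow_add, ← two_mul, hc]
    have : Subgroup.closure {x, y} ≤ Subgroup.centralizer {z ^ c} := by
      rw [Subgroup.closure_le]
      rintro w (rfl | rfl)
      · rw [SetLike.mem_coe, Subgroup.mem_centralizer_singleton_iff, hzx', h1]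
      · rw [SetLike.mem_coe, Subgroup.mem_centralizer_singleton_iff, hzy', h1]
    rw [hgen] at this
    rw [Subgroup.mem_center_iff]
    intro g
    exact Subgroup.mem_centralizer_singleton_iff.mp (this (Subgroup.mem_top g))
  obtain ⟨k, rfl⟩ : ∃ k, ℓ = k + 2 := ⟨ℓ - 2, by omega⟩
  simp only [show k + 2 - 1 = k + 1 by omega, show k + 2 - 2 = k by omega] at hc1 hc2
  have hzord : orderOf z = 2 ^ (k + 2) := by
    apply orderOf_eq_prime_pow
    · intro h
      apply hc2
      have := hcen' ((2 ^ k : ℕ) : ℤ) (by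
        rw [← h, ← zpow_natCast]; congr 1; push_cast; ring)
      rwa [zpow_natCast] at this
    · have := hcen ((2 ^ (k + 1) : ℕ) : ℤ) (by rwa [zpow_natCast])
      rw [← this, ← zpow_natCast]; congr 1; push_cast; ring
  have f3 : ∀ c : ℤ, z ^ c = 1 → (2 ^ (k + 2) : ℤ) ∣ c := by
    intro c hc
    rw [← orderOf_dvd_iff_zpow_eq_one, hzord] at hc
    exact_mod_cast hc
  have hcpow : ∀ w ∈ Subgroup.zpowers z, w ∈ Subgroup.center G →
      ∃ e : ℕ, e ≤ 1 ∧ w = z ^ (e * 2 ^ (k + 1)) := by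
    rintro _ ⟨c, rfl⟩ hc
    obtain ⟨d, hd⟩ := f3 _ (hcen c hc)
    have hd' : c = 2 ^ (k + 1) * d := by
      have : (2 : ℤ) ^ (k + 2) = 2 * 2 ^ (k + 1) := by ring
      rw [this] at hd
      nlinarith
    refine ⟨(d % 2).toNat, by omega, ?_⟩
    simp only
    rw [← zpow_natCast, ← mul_inv_eq_one, ← zpow_neg, ← zpow_add, ← orderOf_dvd_iff_zpow_eq_one,
      hzord, hd']
    push_cast
    rw [Int.toNat_of_nonneg (by omega)]
    refine ⟨d / 2, ?_⟩
    have := Int.emod_add_mul_ediv d 2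
    linear_combination (2 : ℤ) ^ (k + 1) * (-this)
  -- derived subgroup
  have hnormal : (Subgroup.zpowers z).Normal := by
    constructor
    rintro _ ⟨c, rfl⟩ g
    have hg : g ∈ Subgroup.normalizer (Subgroup.zpowers z : Set G) := by
      have : Subgroup.closure {x, y} ≤ Subgroup.normalizer (Subgroup.zpowers z : Set G) := by
        rw [Subgroup.closure_le]
        have aux : ∀ u : G, (∀ c : ℤ, z ^ c * u = u * z ^ (-c)) →
            u ∈ Subgroup.normalizer (Subgroup.zpowers z : Set G) := by
          intro u hu
          rw [Subgroup.mem_normalizer_iff]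
          intro h
          constructor
          · rintro ⟨c, rfl⟩
            refine ⟨-c, ?_⟩
            simp only
            rw [eq_mul_inv_iff_mul_eq, hu, neg_neg]
          · rintro ⟨c, hc⟩
            refine ⟨-c, ?_⟩
            simp only at hc ⊢
            rw [eq_mul_inv_iff_mul_eq, hu] at hc
            exact mul_left_cancel hc
        rintro w (rfl | rfl)
        · exact aux _ hzx'
        · exact aux _ hzy'
      rw [hgen] at this
      exact this (Subgroup.mem_top g)
    exact (Subgroup.mem_normalizer_iff.mp hg _).mp ⟨c, rfl⟩
  have hzcomm : z ∈ commutator G := by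
    have : z = ⁅y⁻¹, x⁻¹⁆ := by rw [hz, commutatorElement_def]; simp
    rw [this]
    exact Subgroup.commutator_mem_commutator (Subgroup.mem_top _) (Subgroup.mem_top _)
  have hcommG : commutator G = Subgroup.zpowers z := by
    apply le_antisymm
    · rw [commutator_def, Subgroup.commutator_le]
      intro g₁ _ g₂ _
      let q := QuotientGroup.mk' (Subgroup.zpowers z)
      have hqz : q z = 1 := (QuotientGroup.eq_one_iff z).mpr (Subgroup.mem_zpowers z)
      have hqc : Commute (q x) (q y) := by
        show q x * q y = q y * q x
        rw [← map_mul q y x, hyx, map_mul, map_mul, hqz, mul_one]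
      have hq : ∀ g, ∃ a b : ℤ, q g = q x ^ a * q y ^ b := by
        intro g
        obtain ⟨a, b, c, rfl⟩ := hnf g
        exact ⟨a, b, by simp [map_mul, map_zpow, hqz]⟩
      obtain ⟨a, b, h⟩ := hq g₁
      obtain ⟨a', b', h'⟩ := hq g₂
      have : q ⁅g₁, g₂⁆ = 1 := by
        rw [map_commutatorElement, commutatorElement_eq_one_iff_commute, h, h']
        have c1 : Commute (q x ^ a) (q x ^ a' * q y ^ b') :=
          Commute.mul_right ((Commute.refl _).zpow_zpow _ _) (hqc.zpow_zpow _ _)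
        have c2 : Commute (q y ^ b) (q x ^ a' * q y ^ b') :=
          Commute.mul_right (hqc.symm.zpow_zpow _ _) ((Commute.refl _).zpow_zpow _ _)
        exact c1.mul_left c2
      exact (QuotientGroup.eq_one_iff _).mp this
    · rw [Subgroup.zpowers_le]; exact hzcomm
  have hker : ∀ g : G, Abelianization.of g = 1 ↔ g ∈ Subgroup.zpowers z := by
    intro g
    rw [← hcommG, ← Abelianization.ker_of, MonoidHom.mem_ker]
  have hofz : (Abelianization.of z : Abelianization G) = 1 :=
    (hker z).mpr (Subgroup.mem_zpowers z)
  have hnfA : ∀ g : Abelianization G, ∃ a b : ℤ,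
      g = Abelianization.of x ^ a * Abelianization.of y ^ b := by
    intro g
    obtain ⟨g, rfl⟩ := QuotientGroup.mk'_surjective _ g
    obtain ⟨a, b, c, rfl⟩ := hnf g
    refine ⟨a, b, ?_⟩
    show Abelianization.of _ = _
    simp [map_mul, map_zpow, hofz]
  have hYnot : (Abelianization.of y : Abelianization G) ∉
      Subgroup.zpowers (Abelianization.of x) := by
    rintro ⟨a, ha⟩
    have ha : Abelianization.of ((x ^ a)⁻¹ * y) = 1 := by
      rw [map_mul, map_inv, map_zpow, ← ha, inv_mul_cancel]
    rw [hker] at ha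
    obtain ⟨c, hc⟩ := ha
    have hy : y = x ^ a * z ^ c := by
      simp only at hc
      rw [hc]; group
    have hcenp : ∀ d : ℤ, x ^ (2 * d) ∈ Subgroup.center G := by
      intro d
      rw [zpow_mul]
      exact Subgroup.zpow_mem _ (by exact_mod_cast hx2) _
    rcases Int.even_or_odd' a with ⟨d, rfl | rfl⟩
    · have h1 : z * y = y * z := by
        have := Subgroup.mem_center_iff.mp (hcenp d) z
        rw [hy, ← mul_assoc, this, mul_assoc, mul_assoc, ← zpow_one_add, ← zpow_add_one, add_comm]
      rw [hzy] at h1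
      have h2 := mul_left_cancel h1
      have h3 : z ^ (2 : ℤ) = 1 := by
        rw [zpow_two]; nth_rewrite 1 [← h2]; rw [inv_mul_cancel]
      have h4 := f3 2 h3
      have h5 : (2 : ℤ) ^ (k + 2) = 2 ^ k * 4 := by ring
      rw [h5] at h4
      have := (Dvd.intro_left _ rfl : (4 : ℤ) ∣ 2 ^ k * 4).trans h4
      omega
    · have hcc := Subgroup.mem_center_iff.mp (hcenp d)
      have hy' : y = x ^ (2 * d) * (x * z ^ c) := by rw [hy, zpow_add_one, mul_assoc]
      have h1 : y * x = x * y * z ^ (-(2 * c)) := by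
        rw [hy']
        have e : x * (x ^ (2 * d) * (x * z ^ c)) = x ^ (2 * d) * (x * (x * z ^ c)) := by
          rw [← mul_assoc, hcc, mul_assoc]
        rw [e]
        simp only [mul_assoc]
        rw [hzx', ← zpow_add]
        congr 5; ring
      rw [hyx, ← mul_assoc] at h1
      have h2 := mul_left_cancel h1
      have h3 : z ^ (1 + 2 * c) = 1 := by
        rw [zpow_add, zpow_one]; nth_rewrite 1 [h2]; rw [zpow_neg, inv_mul_cancel]
      have h4 := f3 _ h3
      have h5 : (2 : ℤ) ^ (k + 2) = 2 ^ (k + 1) * 2 := by ring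
      rw [h5] at h4
      have := (Dvd.intro_left _ rfl : (2 : ℤ) ∣ 2 ^ (k + 1) * 2).trans h4
      omega
  have hA : IsPGroup 2 (Abelianization G) := hG.to_quotient (commutator G)
  obtain ⟨n, m, s, hm1, hmn, hs, hXn, hYm, hfact, hiso⟩ :=
    aux_ab hA (Abelianization.of x) (Abelianization.of y) hnfA hord hYnot
  have hpowc : ∀ u : G, u ^ 2 ∈ Subgroup.center G → ∀ e d : ℕ, 1 ≤ d →
      u ^ (e * 2 ^ d) ∈ Subgroup.center G := by
    intro u hu e d hd
    obtain ⟨d', rfl⟩ : ∃ d', d = d' + 1 := ⟨d - 1, by omega⟩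
    have : e * 2 ^ (d' + 1) = 2 * (e * 2 ^ d') := by ring
    rw [this, pow_mul]
    exact Subgroup.pow_mem _ hu _
  obtain ⟨r, hr, hrx⟩ := hcpow (x ^ (2 ^ n))
    (by rw [← hker, map_pow, ← hXn, pow_orderOf_eq_one])
    (by have := hpowc x hx2 1 n (by omega); rwa [one_mul] at this)
  obtain ⟨t, ht, hty⟩ := hcpow ((x ^ (s * 2 ^ m))⁻¹ * y ^ (2 ^ m))
    (by rw [← hker, map_mul, map_inv, map_pow, map_pow, hYm, inv_mul_cancel])
    (by
      have := hpowc y hy2 1 m hm1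
      rw [one_mul] at this
      exact Subgroup.mul_mem _ (Subgroup.inv_mem _ (hpowc x hx2 s m hm1)) this)
  refine ⟨n, m, r, s, t, hm1, hmn, hr, hs, ht, ?_, hiso, ?_⟩
  · apply aux_iso x y z hgen n m (k + 2) r s t hm1 hrx ?_ ?_ hz hzx hzy ?_ ?_ f3
    · rw [show k + 2 - 1 = k + 1 by omega, ← hty]; group
    · rw [← hzord, pow_orderOf_eq_one]
    · intro a b c h
      apply hfact a b
      have := congrArg Abelianization.of h
      simpa [map_mul, map_zpow, hofz] using this
    · intro a c h
      have := congrArg Abelianization.of h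
      simp only [map_mul, map_zpow, hofz, one_zpow, mul_one, map_one] at this
      rw [← orderOf_dvd_iff_zpow_eq_one, hXn] at this
      exact_mod_cast this
  · rw [hcommG]
    have := zmodCyclicMulEquiv (G := Subgroup.zpowers z) inferInstance
    rw [Nat.card_zpowers, hzord] at this
    exact ⟨this.symm⟩

/-- The dihedral computation for a pair of generators mapping to reflections. -/
lemma aux_dih {G : Type*} [Group G] (x y : G) (hgen : Subgroup.closure {x, y} = ⊤) (ℓ : ℕ)
    (hℓ : 2 ≤ ℓ) (φ : G →* DihedralGroup (2 ^ ℓ)) (hφ : Function.Surjective φ)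
    (hker : ∀ g, φ g = 1 ↔ g ∈ Subgroup.center G)
    (i j : ZMod (2 ^ ℓ)) (hx : φ x = DihedralGroup.sr i) (hy : φ y = DihedralGroup.sr j) :
    x ^ 2 ∈ Subgroup.center G ∧ y ^ 2 ∈ Subgroup.center G ∧
    (y⁻¹ * x⁻¹ * y * x) ^ (2 ^ (ℓ - 1)) ∈ Subgroup.center G ∧
    (y⁻¹ * x⁻¹ * y * x) ^ (2 ^ (ℓ - 2)) ∉ Subgroup.center G := by
  have hodd := aux_odd x y hgen ℓ hℓ φ hφ i j hx hy
  have hz : ∀ e : ℕ, φ ((y⁻¹ * x⁻¹ * y * x) ^ e) = DihedralGroup.r (2 * (i - j) * (e : ZMod (2 ^ ℓ))) := by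
    intro e
    have : φ (y⁻¹ * x⁻¹ * y * x) = DihedralGroup.r (2 * (i - j)) := by
      simp only [map_mul, map_inv, hx, hy, DihedralGroup.inv_sr, DihedralGroup.sr_mul_sr,
        DihedralGroup.r_mul_sr]
      congr 1; ring
    rw [map_pow, this, DihedralGroup.r_pow]
  obtain ⟨k, rfl⟩ : ∃ k, ℓ = k + 2 := ⟨ℓ - 2, by omega⟩
  refine ⟨?_, ?_, ?_, ?_⟩
  · rw [← hker, map_pow, hx, pow_two, DihedralGroup.sr_mul_self]
  · rw [← hker, map_pow, hy, pow_two, DihedralGroup.sr_mul_self]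
  · rw [← hker, hz, DihedralGroup.one_def]
    congr 1
    have h0 : ((2 ^ (k + 2) : ℕ) : ZMod (2 ^ (k + 2))) = 0 := ZMod.natCast_self _
    rw [show k + 2 - 1 = k + 1 by omega]
    push_cast at h0 ⊢
    linear_combination (i - j) * h0
  · rw [← hker, hz, DihedralGroup.one_def]
    intro h
    injection h with h
    apply hodd
    obtain ⟨v, hv⟩ : ∃ v : ℕ, (v : ZMod (2 ^ (k + 2))) = i - j := ⟨_, ZMod.natCast_zmod_val _⟩
    rw [← hv, show k + 2 - 2 = k by omega] at h
    have h' : ((2 * v * 2 ^ k : ℕ) : ZMod (2 ^ (k + 2))) = 0 := by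
      rw [← h]; push_cast; ring
    rw [ZMod.natCast_eq_zero_iff] at h'
    have h2 : 2 ^ (k + 1) * 2 ∣ 2 ^ (k + 1) * v := by
      convert h' using 1 <;> ring
    have h3 : 2 ∣ v := Nat.dvd_of_mul_dvd_mul_left (by positivity) h2
    rw [← hv]
    obtain ⟨w, rfl⟩ := h3
    exact ⟨w, by push_cast; ring⟩

end Aux12

/-- A two-generated finite 2-group G whose central quotient is dihedral of
order 2^{ℓ+1} (ℓ ≥ 2) is isomorphic to some G_θ with n ≥ m ≥ 1, r ≤ 1, s ≤ 2^{n-m}-1,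
t ≤ 1; moreover G/[G,G] ≅ C_{2^n} × C_{2^m} and [G,G] ≅ C_{2^ℓ}. -/
theorem stmt12 {G : Type*} [Group G] [Finite G] (hG : IsPGroup 2 G)
    (x y : G) (hgen : Subgroup.closure {x, y} = ⊤)
    (ℓ : ℕ) (hℓ : 2 ≤ ℓ)
    (hdq : Nonempty ((G ⧸ Subgroup.center G) ≃* DihedralGroup (2 ^ ℓ))) :
    ∃ n m r s t : ℕ, 1 ≤ m ∧ m ≤ n ∧ r ≤ 1 ∧ s ≤ 2 ^ (n - m) - 1 ∧ t ≤ 1 ∧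
      Nonempty (G ≃* Gθ n m ℓ r s t) ∧
      Nonempty ((G ⧸ commutator G) ≃*
        (Multiplicative (ZMod (2 ^ n)) × Multiplicative (ZMod (2 ^ m)))) ∧
      Nonempty (commutator G ≃* Multiplicative (ZMod (2 ^ ℓ))) := by
  obtain ⟨e⟩ := hdq
  let φ : G →* DihedralGroup (2 ^ ℓ) :=
    e.toMonoidHom.comp (QuotientGroup.mk' (Subgroup.center G))
  have hφ : Function.Surjective φ :=
    e.surjective.comp (QuotientGroup.mk'_surjective _)
  have hker : ∀ g, φ g = 1 ↔ g ∈ Subgroup.center G := by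
    intro g
    rw [← QuotientGroup.eq_one_iff]
    exact e.map_eq_one_iff
  obtain ⟨x, y, i, j, hgen, hx, hy⟩ := aux_refl x y hgen _ φ hφ
  have hgen' : Subgroup.closure {y, x} = ⊤ := by rwa [Set.pair_comm]
  have hA : IsPGroup 2 (Abelianization G) := hG.to_quotient (commutator G)
  obtain ⟨a, ha⟩ := IsPGroup.iff_orderOf.mp hA (Abelianization.of x)
  obtain ⟨b, hb⟩ := IsPGroup.iff_orderOf.mp hA (Abelianization.of y)
  rcases le_total b a with h | h
  · obtain ⟨h1, h2, h3, h4⟩ := aux_dih x y hgen ℓ hℓ φ hφ hker i j hx hy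
    exact aux_core hG x y hgen ℓ hℓ h1 h2 h3 h4 (by rw [ha, hb]; exact pow_dvd_pow 2 h)
  · obtain ⟨h1, h2, h3, h4⟩ := aux_dih y x hgen' ℓ hℓ φ hφ hker j i hy hx
    exact aux_core hG y x hgen' ℓ hℓ h1 h2 h3 h4 (by rw [ha, hb]; exact pow_dvd_pow 2 h)
end

section
/- Let n ≥ 2 and ℓ ≥ 2. In the group G₁ = ⟨x, y, z | x^{2^n} = 1, y² = 1, z² = 1 (ℓ = 1 here: take the relations x^{2^n}=1, y²=1, z²=1, [y,x]=z, [z,x]=1, [z,y]=1)⟩ — formally, G₁ = G_⚀(n,1,1) — there exists a maximal subgroup isomorphic to C_{2^{n-1}} × C_2 × C_2, whereas in G₂ = G_⚁(n,1,1) with relations x^{2^n}=1, y²=x², z²=1, [y,x]=z, [z,x]=1, [z,y]=1, every maximal subgroup is two-generated. In particular G_⚀(n,1,1) ≇ G_⚁(n,1,1). -/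
open FreeGroup in
/-- Relators of G_⚀(n,1,1) = ⟨x,y,z | x^{2^n} = 1, y² = 1, z² = 1, [y,x] = z, z central⟩
(convention [y,x] = y⁻¹x⁻¹yx; generators 0 ↦ x, 1 ↦ y, 2 ↦ z). -/
def relsGA (n : ℕ) : Set (FreeGroup (Fin 3)) :=
  { (of 0) ^ (2 ^ n), (of 1) ^ 2, (of 2) ^ 2,
    (of 1)⁻¹ * (of 0)⁻¹ * of 1 * of 0 * (of 2)⁻¹,
    (of 2)⁻¹ * (of 0)⁻¹ * of 2 * of 0,
    (of 2)⁻¹ * (of 1)⁻¹ * of 2 * of 1 }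

open FreeGroup in
/-- Relators of G_⚁(n,1,1) = ⟨x,y,z | x^{2^n} = 1, y² = x², z² = 1, [y,x] = z, z central⟩
(generators 0 ↦ x, 1 ↦ y, 2 ↦ z). -/
def relsGB (n : ℕ) : Set (FreeGroup (Fin 3)) :=
  { (of 0) ^ (2 ^ n), (of 1) ^ 2 * ((of 0) ^ 2)⁻¹, (of 2) ^ 2,
    (of 1)⁻¹ * (of 0)⁻¹ * of 1 * of 0 * (of 2)⁻¹,
    (of 2)⁻¹ * (of 0)⁻¹ * of 2 * of 0,
    (of 2)⁻¹ * (of 1)⁻¹ * of 2 * of 1 }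

abbrev GA (n : ℕ) := PresentedGroup (relsGA n)
abbrev GB (n : ℕ) := PresentedGroup (relsGB n)


section helpers
variable {G : Type*} [Group G]

lemma aux_comm_zpow {x y z : G} (hxy : y * x = x * y * z) (hzx : Commute z x) (hzy : Commute z y)
    (i : ℤ) : y * x ^ i = x ^ i * y * z ^ i := by
  have h1 : y * x * y⁻¹ = x * z := by
    rw [hxy, mul_assoc x y z, ← hzy.eq]; group
  have h2 : y * x ^ i * y⁻¹ = x ^ i * z ^ i := by
    rw [← conj_zpow, h1, hzx.symm.mul_zpow]
  calc y * x ^ i = (y * x ^ i * y⁻¹) * y := by group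
    _ = x ^ i * (z ^ i * y) := by rw [h2, mul_assoc]
    _ = x ^ i * y * z ^ i := by rw [(hzy.zpow_left i).eq, mul_assoc]

/-- normal form -/
lemma aux_normal_form {x y z : G} (hxy : y * x = x * y * z) (hzx : Commute z x)
    (hzy : Commute z y) (hgen : Subgroup.closure {x, y, z} = ⊤) (g : G) :
    ∃ i j k : ℤ, g = x ^ i * y ^ j * z ^ k := by
  have hg : g ∈ Subgroup.closure {x, y, z} := by rw [hgen]; trivial
  have hy := aux_comm_zpow hxy hzx hzy
  induction hg using Subgroup.closure_induction_left with
  | one => exact ⟨0, 0, 0, by simp⟩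
  | mul_left a ha b _ ih =>
    obtain ⟨i, j, k, rfl⟩ := ih
    rcases ha with rfl | rfl | rfl
    · exact ⟨i + 1, j, k, by group⟩
    · refine ⟨i, j + 1, k + i, ?_⟩
      calc a * (x ^ i * a ^ j * z ^ k) = (a * x ^ i) * a ^ j * z ^ k := by group
        _ = x ^ i * a * (z ^ i * a ^ j) * z ^ k := by rw [hy]; group
        _ = _ := by rw [((hzy.zpow_left i).zpow_right j).eq]; group
    · refine ⟨i, j, k + 1, ?_⟩
      have hc : Commute a (x ^ i * y ^ j) := (hzx.zpow_right i).mul_right (hzy.zpow_right j)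
      rw [← mul_assoc, hc.eq]; group
  | inv_mul_cancel a ha b _ ih =>
    obtain ⟨i, j, k, rfl⟩ := ih
    rcases ha with rfl | rfl | rfl
    · exact ⟨i - 1, j, k, by group⟩
    · refine ⟨i, j - 1, k - i, ?_⟩
      have hy' : a⁻¹ * x ^ i = x ^ i * a⁻¹ * z ^ (-i) := by
        have h3 : a * x ^ i * z ^ (-i) = x ^ i * a := by rw [hy]; group
        have h4 : Commute (z ^ (-i)) a⁻¹ := (hzy.zpow_left _).inv_right
        rw [mul_assoc, ← h4.eq, ← mul_assoc, inv_mul_eq_iff_eq_mul, ← mul_assoc, ← mul_assoc, h3]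
        group
      calc a⁻¹ * (x ^ i * a ^ j * z ^ k) = (a⁻¹ * x ^ i) * a ^ j * z ^ k := by group
        _ = x ^ i * a⁻¹ * (z ^ (-i) * a ^ j) * z ^ k := by rw [hy']; group
        _ = _ := by rw [((hzy.zpow_left (-i)).zpow_right j).eq]; group
    · refine ⟨i, j, k - 1, ?_⟩
      have hc : Commute a⁻¹ (x ^ i * y ^ j) :=
        ((hzx.zpow_right i).mul_right (hzy.zpow_right j)).inv_left
      rw [← mul_assoc, hc.eq]; group

lemma aux_coatom_central {M : Subgroup G} (hM : IsCoatom M) {w : G} (hw : ∀ g, Commute w g)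
    (hwM : w ∉ M) (g : G) : ∃ m ∈ M, ∃ k : ℤ, g = m * w ^ k := by
  have hN : (Subgroup.zpowers w).Normal := by
    refine ⟨?_⟩
    rintro _ ⟨k, rfl⟩ g
    refine ⟨k, ?_⟩
    simp only
    rw [← ((hw g).zpow_left k).eq]; group
  have htop : M ⊔ Subgroup.zpowers w = ⊤ := by
    apply hM.2
    refine lt_of_le_of_ne le_sup_left ?_
    intro h
    apply hwM
    rw [h]
    exact Subgroup.mem_sup_right (Subgroup.mem_zpowers w)
  have hg : g ∈ M ⊔ Subgroup.zpowers w := by rw [htop]; trivial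
  rw [Subgroup.mem_sup_of_normal_right] at hg
  obtain ⟨m, hm, _, ⟨k, rfl⟩, h⟩ := hg
  exact ⟨m, hm, k, h.symm⟩

lemma aux_zmod_hom (m : ℕ) (g : G) (h : g ^ m = 1) :
    ∃ f : Multiplicative (ZMod m) →* G, ∀ k : ℤ, f (Multiplicative.ofAdd (k : ZMod m)) = g ^ k := by
  refine ⟨AddMonoidHom.toMultiplicativeLeft
    (ZMod.lift m ⟨(zmultiplesHom (Additive G)) (Additive.ofMul g), ?_⟩), ?_⟩
  · simp [← ofMul_pow, h]
  · intro k
    simp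

lemma aux_coatom_ker (χ : G →* Multiplicative (ZMod 2)) {x : G} (hx : χ x ≠ 1) :
    IsCoatom χ.ker := by
  have hC : ∀ a b : Multiplicative (ZMod 2), a ≠ 1 → b ≠ 1 → a * b⁻¹ = 1 := by decide
  refine ⟨fun h => hx (MonoidHom.mem_ker.1 (h ▸ Subgroup.mem_top x)), ?_⟩
  intro K hK
  obtain ⟨hle, k, hk, hk'⟩ := SetLike.lt_iff_le_and_exists.1 hK
  rw [eq_top_iff]
  intro g _
  by_cases hg : χ g = 1
  · exact hle hg
  · have : g * k⁻¹ ∈ K := hle (by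
      rw [MonoidHom.mem_ker, map_mul, map_inv]; exact hC _ _ hg hk')
    simpa using K.mul_mem this hk

lemma aux_B {x y z : G} (n : ℕ) (hx : x ^ (2 ^ n) = 1) (hyx : y ^ 2 = x ^ 2)
    (hxy : y * x = x * y * z) (hzx : Commute z x) (hzy : Commute z y)
    (hgen : Subgroup.closure {x, y, z} = ⊤)
    (M : Subgroup G) (hM : IsCoatom M) : ∃ u v : G, M = Subgroup.closure {u, v} := by
  have nf := aux_normal_form hxy hzx hzy hgen
  have hzc : ∀ g, Commute z g := by
    intro g
    obtain ⟨i, j, k, rfl⟩ := nf g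
    exact ((hzx.zpow_right i).mul_right (hzy.zpow_right j)).mul_right (Commute.refl z |>.zpow_right k)
  have hwx : Commute (x ^ 2) x := Commute.pow_self x 2
  have hwy : Commute (x ^ 2) y := hyx ▸ Commute.pow_self y 2
  have hwc : ∀ g, Commute (x ^ 2) g := by
    intro g
    obtain ⟨i, j, k, rfl⟩ := nf g
    exact ((hwx.zpow_right i).mul_right (hwy.zpow_right j)).mul_right ((hzc _).symm.zpow_right k)
  have hzM : z ∈ M := by
    by_contra hz
    obtain ⟨a, ha, i, hai⟩ := aux_coatom_central hM hzc hz x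
    obtain ⟨b, hb, j, hbj⟩ := aux_coatom_central hM hzc hz y
    apply hz
    have hax : a = x * z ^ (-i) := by rw [hai]; group
    have hby : b = y * z ^ (-j) := by rw [hbj]; group
    have c1 : Commute (z ^ (-i)) y := (hzc _).zpow_left _
    have c2 : Commute (z ^ (-j)) x := (hzc _).zpow_left _
    have e1 : b * a = (a * b) * z := by
      rw [hax, hby]
      calc y * z ^ (-j) * (x * z ^ (-i)) = y * (z ^ (-j) * x) * z ^ (-i) := by group
        _ = (y * x) * z ^ (-j) * z ^ (-i) := by rw [c2.eq]; group
        _ = x * (y * z ^ (-i)) * z ^ (-j) * z := by rw [hxy]; group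
        _ = _ := by rw [← c1.eq]; group
    have : z = (a * b)⁻¹ * (b * a) := by rw [e1]; group
    rw [this]
    exact M.mul_mem (M.inv_mem (M.mul_mem ha hb)) (M.mul_mem hb ha)
  have hwM : x ^ 2 ∈ M := by
    by_contra hw
    obtain ⟨a, ha, k, hak⟩ := aux_coatom_central hM hwc hw x
    apply hw
    have c : Commute a ((x ^ 2) ^ k) := ((hwc a).zpow_left k).symm
    have e : (x ^ 2) ^ (1 - 2 * k) ∈ M := by
      have e1 : x ^ 2 = a ^ 2 * ((x ^ 2) ^ k) ^ 2 := by
        rw [← c.mul_pow, ← hak]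
      have e2 : (x ^ 2) ^ (1 - 2 * k) = x ^ 2 * (((x ^ 2) ^ k) ^ 2)⁻¹ := by group
      have e3 : (x ^ 2) ^ (1 - 2 * k) = a ^ 2 := by
        rw [e2, mul_inv_eq_iff_eq_mul]; exact e1
      rw [e3]; exact M.pow_mem ha 2
    have hcop : IsCoprime (1 - 2 * k) ((2 : ℤ) ^ n) := by
      apply IsCoprime.pow_right
      exact ⟨1, k, by ring⟩
    obtain ⟨s, t, hst⟩ := hcop
    have hwn : (x ^ 2) ^ ((2 : ℤ) ^ n) = 1 := by
      have : ((2 : ℤ) ^ n) = ((2 ^ n : ℕ) : ℤ) := by push_cast; rfl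
      rw [this, zpow_natCast, ← pow_mul, mul_comm, pow_mul, hx, one_pow]
    have : x ^ 2 = ((x ^ 2) ^ (1 - 2 * k)) ^ s := by
      calc x ^ 2 = (x ^ 2) ^ (1 : ℤ) := by simp
        _ = ((x ^ 2) ^ (1 - 2 * k)) ^ s * ((x ^ 2) ^ ((2 : ℤ) ^ n)) ^ t := by
          rw [← zpow_mul, ← zpow_mul, ← zpow_add, mul_comm _ s, mul_comm _ t, hst]
        _ = _ := by rw [hwn]; simp
    rw [this]; exact M.zpow_mem e s
  have hnot : ¬ (x ∈ M ∧ y ∈ M) := by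
    rintro ⟨h1, h2⟩
    apply hM.1
    rw [eq_top_iff, ← hgen, Subgroup.closure_le]
    rintro _ (rfl | rfl | rfl) <;> assumption
  have pe : ∀ r : ℤ, x ^ (r + r) = (x ^ 2) ^ r := fun r => by
    rw [← zpow_natCast, ← zpow_mul]; congr 1; push_cast; ring
  have po : ∀ r : ℤ, x ^ (2 * r + 1) = x * (x ^ 2) ^ r := fun r => by
    rw [← pe]; group
  have qe : ∀ r : ℤ, y ^ (r + r) = (x ^ 2) ^ r := fun r => by
    rw [← hyx, ← zpow_natCast, ← zpow_mul]; congr 1; push_cast; ring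
  have qo : ∀ r : ℤ, y ^ (2 * r + 1) = y * (x ^ 2) ^ r := fun r => by
    rw [← qe]; group
  -- every element is one of four cosets of `⟨x^2, z⟩`
  have cos : ∀ g, ∃ a b : ℤ, g = (x ^ 2) ^ a * z ^ b ∨ g = x * ((x ^ 2) ^ a * z ^ b) ∨
      g = y * ((x ^ 2) ^ a * z ^ b) ∨ g = (x * y) * ((x ^ 2) ^ a * z ^ b) := by
    intro g
    obtain ⟨i, j, k, rfl⟩ := nf g
    rcases Int.even_or_odd i with ⟨r, rfl⟩ | ⟨r, rfl⟩ <;>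
    rcases Int.even_or_odd j with ⟨s, rfl⟩ | ⟨s, rfl⟩ <;> refine ⟨r + s, k, ?_⟩
    · left; rw [pe, qe, zpow_add]
    · right; right; left
      rw [pe, qo, ← mul_assoc, ((hwc y).zpow_left r).eq, zpow_add]; group
    · right; left; rw [po, qe, zpow_add]; group
    · right; right; right
      rw [po, qo, zpow_add, mul_assoc x, ← mul_assoc _ y, ((hwc y).zpow_left r).eq]; group
  have hN : ∀ a b : ℤ, (x ^ 2) ^ a * z ^ b ∈ M := fun a b =>
    M.mul_mem (M.zpow_mem hwM a) (M.zpow_mem hzM b)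
  have fin : ∀ S : Subgroup G, S ≤ M → x ^ 2 ∈ S → z ∈ S → (x ∈ M → x ∈ S) → (y ∈ M → y ∈ S) →
      (x * y ∈ M → x * y ∈ S) → M = S := by
    intro S hS hw hz h1 h2 h3
    refine le_antisymm ?_ hS
    intro g hg
    obtain ⟨a, b, h⟩ := cos g
    have hNS : (x ^ 2) ^ a * z ^ b ∈ S := S.mul_mem (S.zpow_mem hw a) (S.zpow_mem hz b)
    rcases h with rfl | rfl | rfl | rfl
    · exact hNS
    · exact S.mul_mem (h1 ((M.mul_mem_cancel_right (hN a b)).1 hg)) hNS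
    · exact S.mul_mem (h2 ((M.mul_mem_cancel_right (hN a b)).1 hg)) hNS
    · exact S.mul_mem (h3 ((M.mul_mem_cancel_right (hN a b)).1 hg)) hNS
  have cl : ∀ u v : G, u ∈ M → v ∈ M → Subgroup.closure {u, v} ≤ M := by
    intro u v hu hv
    rw [Subgroup.closure_le]
    rintro _ (rfl | rfl) <;> assumption
  have clu : ∀ u v : G, u ∈ Subgroup.closure {u, v} := fun u v =>
    Subgroup.subset_closure (by simp)
  have clv : ∀ u v : G, v ∈ Subgroup.closure {u, v} := fun u v =>
    Subgroup.subset_closure (by simp)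
  by_cases hxM : x ∈ M
  · have hyM : y ∉ M := fun h => hnot ⟨hxM, h⟩
    refine ⟨x, z, fin _ (cl _ _ hxM hzM) (pow_mem (clu _ _) 2) (clv _ _) (fun _ => clu _ _)
      (fun h => absurd h hyM) (fun h => absurd ((M.mul_mem_cancel_left hxM).1 h) hyM)⟩
  by_cases hyM : y ∈ M
  · refine ⟨y, z, fin _ (cl _ _ hyM hzM) (hyx ▸ pow_mem (clu _ _) 2) (clv _ _)
      (fun h => absurd h hxM) (fun _ => clu _ _)
      (fun h => absurd ((M.mul_mem_cancel_right hyM).1 h) hxM)⟩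
  by_cases hxyM : x * y ∈ M
  · refine ⟨x * y, x ^ 2, fin _ (cl _ _ hxyM hwM) (clv _ _) ?_
      (fun h => absurd h hxM) (fun h => absurd h hyM) (fun _ => clu _ _)⟩
    have e : (x * y) ^ 2 = x ^ 2 * x ^ 2 * z := by
      calc (x * y) ^ 2 = x * (y * x) * y := by rw [pow_two]; group
        _ = x * x * y * (z * y) := by rw [hxy]; group
        _ = x ^ 2 * y ^ 2 * z := by rw [hzy.eq, pow_two, pow_two]; group
        _ = _ := by rw [hyx]
    have : z = (x ^ 2 * x ^ 2)⁻¹ * (x * y) ^ 2 := by rw [e]; group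
    have h5 : (x ^ 2 * x ^ 2)⁻¹ * (x * y) ^ 2 ∈ Subgroup.closure {x * y, x ^ 2} :=
      mul_mem (inv_mem (mul_mem (clv _ _) (clv _ _))) (pow_mem (clu _ _) 2)
    rwa [← this] at h5
  · exact ⟨x ^ 2, z, fin _ (cl _ _ hwM hzM) (clu _ _) (clv _ _)
      (fun h => absurd h hxM) (fun h => absurd h hyM) (fun h => absurd h hxyM)⟩

lemma aux_A {x y z : G} (n : ℕ) (hn : 2 ≤ n) (hx : x ^ (2 ^ n) = 1) (hy : y ^ 2 = 1)
    (hz : z ^ 2 = 1)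
    (hxy : y * x = x * y * z) (hzx : Commute z x) (hzy : Commute z y)
    (hgen : Subgroup.closure {x, y, z} = ⊤)
    (f : G →* Multiplicative (ZMod (2 ^ n))) (hfx : f x = Multiplicative.ofAdd 1)
    (hfy : f y = 1) (hfz : f z = 1)
    (χ : G →* Multiplicative (ZMod 2)) (hχx : χ x = Multiplicative.ofAdd 1)
    (hχy : χ y = 1) (hχz : χ z = 1)
    (ψ : G →* Multiplicative (ZMod 2)) (hψx : ψ x = 1)
    (hψy : ψ y = Multiplicative.ofAdd 1) (hψz : ψ z = 1) (hz1 : z ≠ 1) :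
    ∃ M : Subgroup G, IsCoatom M ∧
      Nonempty (M ≃* (Multiplicative (ZMod (2 ^ (n - 1))) × Multiplicative (ZMod 2) ×
        Multiplicative (ZMod 2))) := by
  have nf := aux_normal_form hxy hzx hzy hgen
  have hwy : Commute (x ^ 2) y := by
    have h := aux_comm_zpow hxy hzx hzy 2
    have e : x ^ (2 : ℤ) = x ^ 2 := by norm_cast
    have e' : z ^ (2 : ℤ) = 1 := by rw [← hz]; norm_cast
    rw [e, e', mul_one] at h
    exact h.symm
  have hwz : Commute (x ^ 2) z := (hzx.pow_right 2).symm
  have hxn : (x ^ 2) ^ (2 ^ (n - 1)) = 1 := by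
    rw [← pow_mul, ← pow_succ', Nat.sub_add_cancel (by omega), hx]
  obtain ⟨p, hp⟩ := aux_zmod_hom _ _ hxn
  obtain ⟨q, hq⟩ := aux_zmod_hom _ _ hy
  obtain ⟨r, hr⟩ := aux_zmod_hom _ _ hz
  have sur : ∀ (m : ℕ) (a : Multiplicative (ZMod m)), ∃ k : ℤ,
      a = Multiplicative.ofAdd (k : ZMod m) := fun m a => by
    obtain ⟨k, hk⟩ := ZMod.intCast_surjective a.toAdd
    exact ⟨k, by rw [hk]; rfl⟩
  have cqr : ∀ b c, Commute (q b) (r c) := by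
    intro b c
    obtain ⟨l, rfl⟩ := sur _ b
    obtain ⟨m, rfl⟩ := sur _ c
    rw [hq, hr]
    exact (hzy.symm.zpow_left _).zpow_right _
  have cp : ∀ a b, Commute (p a) ((q.noncommCoprod r cqr) b) := by
    rintro a ⟨b, c⟩
    obtain ⟨k, rfl⟩ := sur _ a
    obtain ⟨l, rfl⟩ := sur _ b
    obtain ⟨m, rfl⟩ := sur _ c
    rw [MonoidHom.noncommCoprod_apply, hp, hq, hr]
    exact ((hwy.zpow_right _).mul_right (hwz.zpow_right _)).zpow_left _
  let φ := p.noncommCoprod (q.noncommCoprod r cqr) cp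
  have hφ : ∀ k l m : ℤ, φ (Multiplicative.ofAdd (k : ZMod (2 ^ (n - 1))),
      Multiplicative.ofAdd (l : ZMod 2), Multiplicative.ofAdd (m : ZMod 2)) =
      (x ^ 2) ^ k * (y ^ l * z ^ m) := by
    intro k l m
    simp only [φ, MonoidHom.noncommCoprod_apply, hp, hq, hr]
  have key : ∀ (m : ℕ) (i : ℤ), (Multiplicative.ofAdd (1 : ZMod m)) ^ i = 1 ↔ (m : ℤ) ∣ i := by
    intro m i
    rw [← ofAdd_zsmul, ofAdd_eq_one, zsmul_one, ZMod.intCast_zmod_eq_zero_iff_dvd]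
  have inj : Function.Injective φ := by
    rw [injective_iff_map_eq_one]
    rintro ⟨a, b, c⟩ h
    obtain ⟨k, rfl⟩ := sur _ a
    obtain ⟨l, rfl⟩ := sur _ b
    obtain ⟨m, rfl⟩ := sur _ c
    rw [hφ] at h
    have h1 := congrArg f h
    have h2 := congrArg ψ h
    simp only [map_mul, map_zpow, map_pow, hfx, hfy, hfz, hψx, hψy, hψz, one_zpow, mul_one,
      map_one, one_pow, one_mul] at h1 h2
    rw [key] at h2
    rw [← zpow_natCast, ← zpow_mul, key] at h1
    have h1' : ((2 ^ (n - 1) : ℕ) : ℤ) ∣ k := by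
      have e : 2 ^ n = 2 * 2 ^ (n - 1) := by rw [← pow_succ', Nat.sub_add_cancel (by omega)]
      rw [e, Nat.cast_mul] at h1
      exact Int.dvd_of_mul_dvd_mul_left (by norm_num) h1
    obtain ⟨k', hk'⟩ := h1'
    obtain ⟨l', hl'⟩ := h2
    have ek : (x ^ 2) ^ k = 1 := by rw [hk', zpow_mul, zpow_natCast, hxn, one_zpow]
    have el : y ^ l = 1 := by rw [hl', zpow_mul, zpow_natCast, hy, one_zpow]
    rw [ek, el, one_mul, one_mul] at h
    have hm : (2 : ℤ) ∣ m := by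
      rcases Int.even_or_odd m with hm | ⟨m', rfl⟩
      · exact hm.two_dvd
      · exfalso
        apply hz1
        have : z ^ (2 * m' + 1) = (z ^ 2) ^ m' * z := by
          rw [zpow_add_one, zpow_mul]; norm_cast
        rw [this, hz, one_zpow, one_mul] at h
        exact h
    simp only [Prod.mk_eq_one, ofAdd_eq_one]
    refine ⟨?_, ?_, ?_⟩
    · rw [ZMod.intCast_zmod_eq_zero_iff_dvd]; exact ⟨k', hk'⟩
    · rw [ZMod.intCast_zmod_eq_zero_iff_dvd]; exact ⟨l', hl'⟩
    · rw [ZMod.intCast_zmod_eq_zero_iff_dvd]; exact_mod_cast hm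
  have hker : φ.range = χ.ker := by
    ext g
    rw [MonoidHom.mem_ker]
    constructor
    · rintro ⟨⟨a, b, c⟩, rfl⟩
      obtain ⟨k, rfl⟩ := sur _ a
      obtain ⟨l, rfl⟩ := sur _ b
      obtain ⟨m, rfl⟩ := sur _ c
      rw [hφ]
      have : (Multiplicative.ofAdd (1 : ZMod 2)) ^ 2 = 1 := by decide
      simp [hχx, hχy, hχz, this]
    · intro h
      obtain ⟨i, j, k, rfl⟩ := nf g
      simp only [map_mul, map_zpow, hχx, hχy, hχz, one_zpow, mul_one] at h
      rw [key] at h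
      obtain ⟨s, rfl⟩ := h
      refine ⟨_, (hφ s j k).trans ?_⟩
      rw [zpow_mul, zpow_natCast, mul_assoc]
  refine ⟨χ.ker, aux_coatom_ker χ (x := x) (by rw [hχx]; decide), ?_⟩
  rw [← hker]
  exact ⟨(φ.ofInjective inj).symm⟩

end helpers

lemma aux_three (m : ℕ) (hm : 2 ∣ m) (G : Type*) [Group G] (u v : G)
    (e : Subgroup.closure {u, v} ≃* (Multiplicative (ZMod m) × Multiplicative (ZMod 2) ×
        Multiplicative (ZMod 2))) : False := by
  let c : Multiplicative (ZMod m) →* Multiplicative (ZMod 2) :=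
    AddMonoidHom.toMultiplicative (ZMod.castHom hm (ZMod 2)).toAddMonoidHom
  have hc : Function.Surjective c := by
    intro a
    obtain ⟨b, hb⟩ := ZMod.castHom_surjective hm a.toAdd
    exact ⟨Multiplicative.ofAdd b, congrArg Multiplicative.ofAdd hb⟩
  let F := (c.prodMap (MonoidHom.id (Multiplicative (ZMod 2) ×
        Multiplicative (ZMod 2)))).comp e.toMonoidHom
  have hF : Function.Surjective F := by
    rintro ⟨a, b⟩
    obtain ⟨a', rfl⟩ := hc a
    obtain ⟨t, ht⟩ := e.surjective (a', b)
    exact ⟨t, by simp [F, ht]⟩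
  let U : Subgroup.closure {u, v} := ⟨u, Subgroup.subset_closure (by simp)⟩
  let V : Subgroup.closure {u, v} := ⟨v, Subgroup.subset_closure (by simp)⟩
  have hinv : ∀ P : Multiplicative (ZMod 2) × Multiplicative (ZMod 2) ×
      Multiplicative (ZMod 2), P⁻¹ = P := by decide
  have hsq : ∀ P : Multiplicative (ZMod 2) × Multiplicative (ZMod 2) ×
      Multiplicative (ZMod 2), P * P = 1 := by decide
  have hcl : ∀ (P Q g : Multiplicative (ZMod 2) × Multiplicative (ZMod 2) ×
      Multiplicative (ZMod 2)), (g = 1 ∨ g = P ∨ g = Q ∨ g = P * Q) →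
      (P * g = 1 ∨ P * g = P ∨ P * g = Q ∨ P * g = P * Q) ∧
      (Q * g = 1 ∨ Q * g = P ∨ Q * g = Q ∨ Q * g = P * Q) := by
    intro P Q g h
    rcases h with h | h | h | h <;> rw [h]
    · simp
    · simp [hsq, mul_comm Q P]
    · simp [hsq]
    · rw [← mul_assoc, hsq, mul_comm P Q, ← mul_assoc, hsq]; simp
  have all : ∀ g (hg : g ∈ Subgroup.closure {u, v}), F ⟨g, hg⟩ = 1 ∨ F ⟨g, hg⟩ = F U ∨
      F ⟨g, hg⟩ = F V ∨ F ⟨g, hg⟩ = F U * F V := by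
    intro g hg
    induction hg using Subgroup.closure_induction_left with
    | one => left; exact map_one F
    | mul_left a ha b hb ih =>
      rcases ha with rfl | rfl
      · have := (hcl _ _ _ ih).1
        rw [← map_mul F U] at this
        exact this
      · have := (hcl _ _ _ ih).2
        rw [← map_mul F V ⟨b, hb⟩] at this
        exact this
    | inv_mul_cancel a ha b hb ih =>
      rcases ha with rfl | rfl
      · have := (hcl _ _ _ ih).1
        rw [← hinv (F U), ← map_inv, ← map_mul F U⁻¹, map_inv, hinv] at this
        exact this
      · have := (hcl _ _ _ ih).2
        rw [← hinv (F V), ← map_inv, ← map_mul F V⁻¹ ⟨b, hb⟩, map_inv, hinv] at this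
        exact this
  have hex : ∀ (P Q : Multiplicative (ZMod 2) × Multiplicative (ZMod 2) ×
      Multiplicative (ZMod 2)), ∃ g, ¬ (g = 1 ∨ g = P ∨ g = Q ∨ g = P * Q) := by
    intro P Q
    by_contra! hcon
    have h1 : (Finset.univ : Finset (Multiplicative (ZMod 2) × Multiplicative (ZMod 2) ×
        Multiplicative (ZMod 2))) ⊆ {1, P, Q, P * Q} := by
      intro g _
      simpa using hcon g
    have h2 := (Finset.card_le_card h1).trans Finset.card_le_four
    have h3 : (Finset.univ : Finset (Multiplicative (ZMod 2) × Multiplicative (ZMod 2) ×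
        Multiplicative (ZMod 2))).card = 8 := by decide
    omega
  obtain ⟨g, hg⟩ := hex (F U) (F V)
  obtain ⟨⟨t, ht⟩, rfl⟩ := hF g
  exact hg (all t ht)

lemma aux_gen (rels : Set (FreeGroup (Fin 3))) :
    Subgroup.closure {(PresentedGroup.of 0 : PresentedGroup rels), PresentedGroup.of 1,
      PresentedGroup.of 2} = ⊤ := by
  rw [← PresentedGroup.closure_range_of rels]
  congr 1
  ext g
  constructor
  · rintro (rfl | rfl | rfl) <;> exact ⟨_, rfl⟩
  · rintro ⟨i, rfl⟩
    fin_cases i <;> simp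

lemma aux_comm {G : Type*} [Group G] {x y z : G} (h : y⁻¹ * x⁻¹ * y * x * z⁻¹ = 1)
    : y * x = x * y * z := by
  rw [mul_inv_eq_one] at h
  rw [← h]; group

lemma aux_comm' {G : Type*} [Group G] {x z : G} (h : z⁻¹ * x⁻¹ * z * x = 1) : Commute z x := by
  have : z * x = x * z * (z⁻¹ * x⁻¹ * z * x) := by group
  rw [h, mul_one] at this
  exact this

lemma aux_GA {n : ℕ} {H : Type*} [Group H] (x y z : H) (hx : x ^ (2 ^ n) = 1) (hy : y ^ 2 = 1)
    (hz : z ^ 2 = 1) (h1 : y⁻¹ * x⁻¹ * y * x * z⁻¹ = 1) (h2 : z⁻¹ * x⁻¹ * z * x = 1)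
    (h3 : z⁻¹ * y⁻¹ * z * y = 1) : ∃ f : GA n →* H, f (PresentedGroup.of 0) = x ∧
      f (PresentedGroup.of 1) = y ∧ f (PresentedGroup.of 2) = z := by
  have h : ∀ r ∈ relsGA n, FreeGroup.lift ![x, y, z] r = 1 := by
    rintro _ (rfl | rfl | rfl | rfl | rfl | rfl) <;> simp <;> assumption
  exact ⟨PresentedGroup.toGroup h, by simp, by simp, by simp⟩

lemma aux_partA (n : ℕ) (hn : 2 ≤ n) : ∃ M : Subgroup (GA n), IsCoatom M ∧
      Nonempty (M ≃* (Multiplicative (ZMod (2 ^ (n - 1))) × Multiplicative (ZMod 2) ×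
        Multiplicative (ZMod 2))) := by
  have two : ∀ (H : Type) [Group H] (g : H), g ^ 2 = 1 → g ^ (2 ^ n) = 1 := by
    intro H _ g hg
    obtain ⟨k, rfl⟩ := Nat.exists_eq_add_of_le hn
    rw [show 2 + k = (k + 1) + 1 by ring, pow_succ', pow_mul, hg, one_pow]
  obtain ⟨f, f1, f2, f3⟩ := aux_GA (n := n) (Multiplicative.ofAdd (1 : ZMod (2 ^ n))) 1 1
    (by rw [← ofAdd_nsmul, ofAdd_eq_one, nsmul_one, ZMod.natCast_self]) (by simp) (by simp)
      (by simp) (by simp) (by simp)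
  obtain ⟨χ, c1, c2, c3⟩ := aux_GA (n := n) (Multiplicative.ofAdd (1 : ZMod 2)) 1 1
    (two _ _ (by decide)) (by simp) (by simp) (by simp) (by simp) (by simp)
  obtain ⟨ψ, p1, p2, p3⟩ := aux_GA (n := n) 1 (Multiplicative.ofAdd (1 : ZMod 2)) 1
    (by simp) (by decide) (by simp) (by simp) (by simp) (by simp)
  obtain ⟨d, d1, d2, d3⟩ := aux_GA (n := n) (DihedralGroup.sr 0 : DihedralGroup 4)
    (DihedralGroup.sr 1) (DihedralGroup.r 2)
    (two _ _ (by decide)) (by decide) (by decide) (by decide) (by decide) (by decide)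
  have rel : ∀ r ∈ relsGA n, PresentedGroup.mk (relsGA n) r = 1 := fun r hr =>
    PresentedGroup.one_of_mem hr
  exact aux_A (x := PresentedGroup.of 0) (y := PresentedGroup.of 1) (z := PresentedGroup.of 2) n hn
    (rel ((FreeGroup.of 0) ^ (2 ^ n)) (by simp [relsGA]))
    (rel ((FreeGroup.of 1) ^ 2) (by simp [relsGA]))
    (rel ((FreeGroup.of 2) ^ 2) (by simp [relsGA]))
    (aux_comm (rel (_ * _ * _ * _ * _) (.inr (.inr (.inr (.inl rfl))))))
    (aux_comm' (rel (_ * _ * _ * _) (.inr (.inr (.inr (.inr (.inl rfl)))))))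
    (aux_comm' (rel (_ * _ * _ * _) (.inr (.inr (.inr (.inr (.inr rfl)))))))
    (aux_gen _) f f1 f2 f3 χ c1 c2 c3 ψ p1 p2 p3
    (fun h => by
      rw [h, map_one] at d3
      revert d3; decide)

lemma aux_partB (n : ℕ) (M : Subgroup (GB n)) (hM : IsCoatom M) :
    ∃ u v : GB n, M = Subgroup.closure {u, v} := by
  have rel : ∀ r ∈ relsGB n, PresentedGroup.mk (relsGB n) r = 1 := fun r hr =>
    PresentedGroup.one_of_mem hr
  exact aux_B (x := PresentedGroup.of 0) (y := PresentedGroup.of 1) (z := PresentedGroup.of 2) n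
    (rel ((FreeGroup.of 0) ^ (2 ^ n)) (.inl rfl))
    (mul_inv_eq_one.1 (rel ((FreeGroup.of 1) ^ 2 * ((FreeGroup.of 0) ^ 2)⁻¹) (.inr (.inl rfl))))
    (aux_comm (rel (_ * _ * _ * _ * _) (.inr (.inr (.inr (.inl rfl))))))
    (aux_comm' (rel (_ * _ * _ * _) (.inr (.inr (.inr (.inr (.inl rfl)))))))
    (aux_comm' (rel (_ * _ * _ * _) (.inr (.inr (.inr (.inr (.inr rfl)))))))
    (aux_gen _) M hM

/-- For n ≥ 2 (and with the ℓ = 1 relations making z central), the group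
G_⚀(n,1,1) has a maximal subgroup isomorphic to C_{2^{n-1}} × C_2 × C_2, whereas every
maximal subgroup of G_⚁(n,1,1) is two-generated; in particular the two groups are not
isomorphic. -/
theorem stmt16 (n : ℕ) (hn : 2 ≤ n) :
    (∃ M : Subgroup (GA n), IsCoatom M ∧
      Nonempty (M ≃* (Multiplicative (ZMod (2 ^ (n - 1))) × Multiplicative (ZMod 2) ×
        Multiplicative (ZMod 2)))) ∧
    (∀ M : Subgroup (GB n), IsCoatom M → ∃ u v : GB n, M = Subgroup.closure {u, v}) ∧
    IsEmpty (GA n ≃* GB n) := by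
  refine ⟨aux_partA n hn, aux_partB n, ⟨fun e => ?_⟩⟩
  obtain ⟨M, hM, ⟨ι⟩⟩ := aux_partA n hn
  obtain ⟨u, v, huv⟩ := aux_partB n (e.mapSubgroup M)
    ((OrderIso.isCoatom_iff e.mapSubgroup M).2 hM)
  have E : Subgroup.closure {u, v} ≃* M :=
    (MulEquiv.subgroupCongr (show M.map e.toMonoidHom = Subgroup.closure {u, v} from huv)).symm.trans
      (e.subgroupMap M).symm
  exact aux_three (2 ^ (n - 1)) (dvd_pow_self 2 (by omega)) _ u v (E.trans ι)
end
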